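/- Let 𝒯 be a rooted tree decomposition of a graph G=(V,E), let S ⊆ V, and let (L^S, X^S, R^S) be an S-trace with L^S ≠ ∅ that occurs in 𝒯, with directed path running from the top node t_max to the bottom node t_min. If t_max has a parent, then this parent is an S-bottom node. -/

import Mathlib

/-! Preliminary definitions: rooted tree decompositions, `S`-traces, `S`-nice and
slim tree decompositions, following Chapelle et al. -/

/-- A walk in `G` all of whose vertices lie in the set `W`. -/
def SimpleGraph.ReachableIn {V : Type} (G : SimpleGraph V) (W : Set V) (u v : V) : Prop :=
  ∃ p : G.Walk u v, ∀ x ∈ p.support, x ∈ W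

/-- The open neighborhood of a set of vertices. -/
def SimpleGraph.nbhdSet {V : Type} (G : SimpleGraph V) (W : Set V) : Set V :=
  {x | x ∉ W ∧ ∃ w ∈ W, G.Adj w x}

/-- The vertex set of the connected component of `G − X` that contains `v`
(assuming `v ∉ X`). -/
def SimpleGraph.compOutside {V : Type} (G : SimpleGraph V) (X : Set V) (v : V) : Set V :=
  {w | G.ReachableIn Xᶜ v w}

/-- A rooted tree decomposition of a graph `G` on vertex type `V`, with node type `ι`.
The rooted tree is given by a parent function: the root is a fixed point of `parent`
and every node reaches the root by iterating `parent`.  The bags satisfy the three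
usual conditions of a tree decomposition; connectedness of `{t | v ∈ bag t}` is
expressed by the existence of a highest node `m` containing `v` such that from any
node whose bag contains `v` the whole ancestor chain up to `m` contains `v`. -/
structure RootedTreeDecomp (V ι : Type) (G : SimpleGraph V) where
  root : ι
  parent : ι → ι
  parent_root : parent root = root
  reaches_root : ∀ t : ι, ∃ n : ℕ, parent^[n] t = root
  bag : ι → Set V
  bags_cover : ∀ v : V, ∃ t : ι, v ∈ bag t
  bags_of_edges : ∀ ⦃u v : V⦄, G.Adj u v → ∃ t : ι, u ∈ bag t ∧ v ∈ bag t
  bags_connected : ∀ v : V, ∃ m : ι, v ∈ bag m ∧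
    ∀ t : ι, v ∈ bag t → ∃ n : ℕ, parent^[n] t = m ∧ ∀ i ≤ n, v ∈ bag (parent^[i] t)

namespace RootedTreeDecomp

variable {V ι : Type} {G : SimpleGraph V}

/-- `t'` lies in the subtree `T_t` rooted at `t`; equivalently, `t` is an
ancestor (possibly equal) of `t'`. -/
def InSubtree (𝒯 : RootedTreeDecomp V ι G) (t t' : ι) : Prop :=
  ∃ n : ℕ, 𝒯.parent^[n] t' = t

/-- `t` is the parent of `t'`. -/
def IsParent (𝒯 : RootedTreeDecomp V ι G) (t t' : ι) : Prop :=
  t' ≠ 𝒯.root ∧ 𝒯.parent t' = t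

/-- `V_t`: the union of the bags of the nodes of the subtree rooted at `t`. -/
def Vt (𝒯 : RootedTreeDecomp V ι G) (t : ι) : Set V :=
  {v | ∃ t', 𝒯.InSubtree t t' ∧ v ∈ 𝒯.bag t'}

/-- `L_t = V_t ∖ X_t`. -/
def Lt (𝒯 : RootedTreeDecomp V ι G) (t : ι) : Set V := 𝒯.Vt t \ 𝒯.bag t

/-- `R_t = V ∖ V_t`. -/
def Rt (𝒯 : RootedTreeDecomp V ι G) (t : ι) : Set V := (𝒯.Vt t)ᶜ

/-- `L_t^S = L_t ∩ S`. -/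
def LS (𝒯 : RootedTreeDecomp V ι G) (S : Set V) (t : ι) : Set V := 𝒯.Lt t ∩ S

/-- `X_t^S = X_t ∩ S`. -/
def XS (𝒯 : RootedTreeDecomp V ι G) (S : Set V) (t : ι) : Set V := 𝒯.bag t ∩ S

/-- `R_t^S = R_t ∩ S`. -/
def RS (𝒯 : RootedTreeDecomp V ι G) (S : Set V) (t : ι) : Set V := 𝒯.Rt t ∩ S

/-- The `S`-trace of a node `t`. -/
def STrace (𝒯 : RootedTreeDecomp V ι G) (S : Set V) (t : ι) : Set V × Set V × Set V :=
  (𝒯.LS S t, 𝒯.XS S t, 𝒯.RS S t)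

/-- Every bag has size at most `k + 1`, i.e. the width is at most `k`. -/
def WidthAtMost (𝒯 : RootedTreeDecomp V ι G) (k : ℕ) : Prop :=
  ∀ t : ι, (𝒯.bag t).ncard ≤ k + 1

/-- The width of the decomposition (max bag size minus one) is exactly `k`. -/
def HasWidth (𝒯 : RootedTreeDecomp V ι G) (k : ℕ) : Prop :=
  𝒯.WidthAtMost k ∧ ∃ t : ι, (𝒯.bag t).ncard = k + 1

/-- `t'` is an `S`-child of `t`. -/
def IsSChild (𝒯 : RootedTreeDecomp V ι G) (S : Set V) (t t' : ι) : Prop :=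
  𝒯.IsParent t t' ∧ ((𝒯.LS S t' ∪ 𝒯.XS S t') \ (𝒯.RS S t ∪ 𝒯.XS S t)).Nonempty

/-- `t` is an `S`-bottom node: `L_t^S ≠ ∅` and `t` is the bottom node of the
directed path of its own `S`-trace (every node with the same `S`-trace is an
ancestor of `t`). -/
def IsSBottom (𝒯 : RootedTreeDecomp V ι G) (S : Set V) (t : ι) : Prop :=
  (𝒯.LS S t).Nonempty ∧ ∀ t', 𝒯.STrace S t' = 𝒯.STrace S t → 𝒯.InSubtree t' t

/-- `t` admits the `S`-operation `introduce(v)`. -/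
def AdmitsIntroduce (𝒯 : RootedTreeDecomp V ι G) (S : Set V) (t : ι) (v : V) : Prop :=
  ∃ t₁, 𝒯.IsSChild S t t₁ ∧ (∀ t₂, 𝒯.IsSChild S t t₂ → t₂ = t₁) ∧
    v ∈ S ∧ v ∉ 𝒯.bag t₁ ∧ 𝒯.XS S t = 𝒯.XS S t₁ ∪ {v}

/-- `t` admits the `S`-operation `forget(v)`. -/
def AdmitsForget (𝒯 : RootedTreeDecomp V ι G) (S : Set V) (t : ι) (v : V) : Prop :=
  ∃ t₁, 𝒯.IsSChild S t t₁ ∧ (∀ t₂, 𝒯.IsSChild S t t₂ → t₂ = t₁) ∧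
    v ∈ S ∧ v ∈ 𝒯.bag t₁ ∧ 𝒯.XS S t = 𝒯.XS S t₁ \ {v}

/-- `t` admits the `S`-operation `join` with the two `S`-children `t₁, t₂`. -/
def AdmitsJoin (𝒯 : RootedTreeDecomp V ι G) (S : Set V) (t t₁ t₂ : ι) : Prop :=
  t₁ ≠ t₂ ∧ 𝒯.IsSChild S t t₁ ∧ 𝒯.IsSChild S t t₂ ∧
    (∀ t₃, 𝒯.IsSChild S t t₃ → t₃ = t₁ ∨ t₃ = t₂) ∧
    𝒯.XS S t₁ ∪ 𝒯.XS S t₂ ⊆ 𝒯.XS S t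

/-- `S`-nice tree decomposition: bags along tree edges are comparable and differ in
size by at most one, and every `S`-bottom node admits one of the `S`-operations. -/
def IsSNice (𝒯 : RootedTreeDecomp V ι G) (S : Set V) : Prop :=
  (∀ t t' : ι, 𝒯.IsParent t' t →
      (𝒯.bag t ⊆ 𝒯.bag t' ∨ 𝒯.bag t' ⊆ 𝒯.bag t) ∧
      (𝒯.bag t).ncard ≤ (𝒯.bag t').ncard + 1 ∧ (𝒯.bag t').ncard ≤ (𝒯.bag t).ncard + 1) ∧
  ∀ t : ι, 𝒯.IsSBottom S t →
    (∃ v, 𝒯.AdmitsIntroduce S t v) ∨ (∃ v, 𝒯.AdmitsForget S t v) ∨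
      (∃ t₁ t₂, 𝒯.AdmitsJoin S t t₁ t₂)

/-- Nice tree decomposition: root and leaves have empty bags, and every internal
node is an introduce, forget, or join node. -/
def IsNice (𝒯 : RootedTreeDecomp V ι G) : Prop :=
  𝒯.bag 𝒯.root = ∅ ∧
  (∀ t : ι, (∀ t', ¬𝒯.IsParent t t') → 𝒯.bag t = ∅) ∧
  ∀ t : ι, (∃ t', 𝒯.IsParent t t') →
    (∃ t', 𝒯.IsParent t t' ∧ (∀ t'', 𝒯.IsParent t t'' → t'' = t') ∧
      ((∃ v, v ∉ 𝒯.bag t' ∧ 𝒯.bag t = 𝒯.bag t' ∪ {v}) ∨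
        (∃ v, v ∈ 𝒯.bag t' ∧ 𝒯.bag t = 𝒯.bag t' \ {v}))) ∨
    (∃ t₁ t₂, t₁ ≠ t₂ ∧ 𝒯.IsParent t t₁ ∧ 𝒯.IsParent t t₂ ∧
      (∀ t₃, 𝒯.IsParent t t₃ → t₃ = t₁ ∨ t₃ = t₂) ∧
      𝒯.bag t = 𝒯.bag t₁ ∧ 𝒯.bag t = 𝒯.bag t₂)

/-- A set of nodes inducing a connected subtree of the tree: it contains a node `m`
such that from every node of the set the whole ancestor chain up to `m` stays in
the set. -/
def ConnectedNodeSet (𝒯 : RootedTreeDecomp V ι G) (A : Set ι) : Prop :=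
  ∃ m ∈ A, ∀ t ∈ A, ∃ n : ℕ, 𝒯.parent^[n] t = m ∧ ∀ i ≤ n, 𝒯.parent^[i] t ∈ A

/-- A full join tree: a non-trivial inclusion-maximal connected set of nodes all of
which share one and the same full bag `X` (of size `k + 1`). -/
def IsFullJoinTree (𝒯 : RootedTreeDecomp V ι G) (k : ℕ) (A : Set ι) (X : Set V) : Prop :=
  A.Nontrivial ∧ 𝒯.ConnectedNodeSet A ∧ X.ncard = k + 1 ∧ (∀ t ∈ A, 𝒯.bag t = X) ∧
  ∀ A' : Set ι, A ⊆ A' → 𝒯.ConnectedNodeSet A' → (∀ t ∈ A', 𝒯.bag t = X) → A' = A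

/-- `m` is the root (top node) of the node set `A`. -/
def IsTopOf (𝒯 : RootedTreeDecomp V ι G) (A : Set ι) (m : ι) : Prop :=
  m ∈ A ∧ ∀ t ∈ A, 𝒯.InSubtree m t

/-- The condition on a pair `(u, ti)` appearing in condition (7) of slimness:
either `ti` belongs to `T'_C` (it is an `S`-child of a node of the full join tree
`A` but is not itself in `A`) and `u ∈ V_{ti}`, or `ti` is the parent of the root
`tr` of the full join tree and `u ∈ V ∖ V_{tr}`. -/
def FullJoinBranch (𝒯 : RootedTreeDecomp V ι G) (S : Set V) (A : Set ι) (tr : ι)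
    (u : V) (ti : ι) : Prop :=
  (ti ∉ A ∧ (∃ ta ∈ A, 𝒯.IsSChild S ta ti) ∧ u ∈ 𝒯.Vt ti) ∨
  (tr ≠ 𝒯.root ∧ ti = 𝒯.parent tr ∧ u ∉ 𝒯.Vt tr)

/-- Slim `S`-nice tree decomposition of width `k` (the seven conditions of the
paper; a bag is *full* if it has size `k + 1`). -/
def IsSlim (𝒯 : RootedTreeDecomp V ι G) (S : Set V) (k : ℕ) : Prop :=
  -- (1) the root is not an S-bottom node
  (¬𝒯.IsSBottom S 𝒯.root) ∧
  -- (2) S-bottom nodes with two S-children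
  (∀ t t₁ t₂ : ι, 𝒯.IsSBottom S t → t₁ ≠ t₂ → 𝒯.IsSChild S t t₁ → 𝒯.IsSChild S t t₂ →
    (∃ A X, 𝒯.IsFullJoinTree k A X ∧ t ∈ A) ∨
      ((𝒯.bag t₁).ncard ≠ k + 1 ∧ (𝒯.bag t₂).ncard ≠ k + 1 ∧
        (𝒯.bag t₁).ncard ≤ (𝒯.bag t).ncard ∧ (𝒯.bag t₂).ncard ≤ (𝒯.bag t).ncard ∧
        ∀ tp, 𝒯.IsParent tp t →
          (𝒯.bag tp).ncard ≠ k + 1 ∧ (𝒯.bag tp).ncard ≤ (𝒯.bag t).ncard)) ∧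
  -- (3) S-bottom nodes with a non-full bag
  (∀ t tp : ι, 𝒯.IsSBottom S t → (𝒯.bag t).ncard ≠ k + 1 → 𝒯.IsParent tp t →
    𝒯.bag t = 𝒯.bag tp ∧ ∀ t'', 𝒯.IsSChild S tp t'' → t'' = t) ∧
  -- (4) S-bottom nodes admitting forget(v)
  (∀ t v t', 𝒯.IsSBottom S t → 𝒯.AdmitsForget S t v → 𝒯.IsSChild S t t' →
    (𝒯.bag t').ncard ≠ k + 1 →
    (∀ t₁ t₂, 𝒯.IsSChild S t' t₁ → 𝒯.IsSChild S t' t₂ → t₁ = t₂) ∧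
      ∀ t'', 𝒯.IsSChild S t' t'' → 𝒯.bag t' = 𝒯.bag t'') ∧
  -- (5) parents of S-bottom nodes with non-full bags
  (∀ t tp, 𝒯.IsSBottom S t → 𝒯.IsParent tp t → (𝒯.bag tp).ncard ≠ k + 1 →
    tp = 𝒯.root ∨ ∀ tpp, 𝒯.IsParent tpp tp → ¬𝒯.IsSBottom S tpp) ∧
  -- (6) nodes of full join trees
  (∀ A X, 𝒯.IsFullJoinTree k A X → ∀ t ∈ A,
    𝒯.IsSBottom S t ∧ ∃ t₁ t₂, t₁ ≠ t₂ ∧ 𝒯.IsSChild S t t₁ ∧ 𝒯.IsSChild S t t₂) ∧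
  -- (7) branching condition of full join trees
  (∀ A X tr, 𝒯.IsFullJoinTree k A X → 𝒯.IsTopOf A tr →
    ∀ v ∈ X \ S, ∃ u₁ u₂ u₃ : V, ∃ t₁ t₂ t₃ : ι,
      u₁ ≠ u₂ ∧ u₁ ≠ u₃ ∧ u₂ ≠ u₃ ∧ t₁ ≠ t₂ ∧ t₁ ≠ t₃ ∧ t₂ ≠ t₃ ∧
      (G.Adj v u₁ ∧ u₁ ∉ X ∧ (∃ s ∈ S, G.ReachableIn Xᶜ u₁ s) ∧
        𝒯.FullJoinBranch S A tr u₁ t₁) ∧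
      (G.Adj v u₂ ∧ u₂ ∉ X ∧ (∃ s ∈ S, G.ReachableIn Xᶜ u₂ s) ∧
        𝒯.FullJoinBranch S A tr u₂ t₂) ∧
      (G.Adj v u₃ ∧ u₃ ∉ X ∧ (∃ s ∈ S, G.ReachableIn Xᶜ u₃ s) ∧
        𝒯.FullJoinBranch S A tr u₃ t₃))

end RootedTreeDecomp

/-- `tw(G) ≤ k`: `G` admits a (rooted) tree decomposition of width at most `k`. -/
def SimpleGraph.TreewidthAtMost {V : Type} (G : SimpleGraph V) (k : ℕ) : Prop :=
  ∃ (ι : Type) (𝒯 : RootedTreeDecomp V ι G), 𝒯.WidthAtMost k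

/-!
The `L`-part of the trace can only grow, and the `R`-part can only shrink, towards the root, and
the two together determine the `X`-part. Hence a trace shared by a node and one of its ancestors is
shared by every node in between. A vertex `v` of `L_tmax` lies in `L_(parent tmax)`, hence in `L_t`
for every node `t` with the trace of `parent tmax`. Then `t` and `tmax` are comparable, because
both are ancestors of the highest node whose bag contains `v`. Moreover `t` is not a descendant of
`tmax`: otherwise `tmax`, squeezed between `parent tmax` and `t`, would have the trace of its
parent, contradicting that it is the top of its path. So `t` is a proper ancestor of `tmax`.
-/

namespace RootedTreeDecomp

variable {V ι : Type} {G : SimpleGraph V} {𝒯 : RootedTreeDecomp V ι G} {S : Set V}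
  {a b c m t : ι} {v : V}

theorem eq_root_of_isPeriodicPt {n : ℕ} (hn : 0 < n)
    (ht : Function.IsPeriodicPt 𝒯.parent n t) : t = 𝒯.root := by
  obtain ⟨k, hk⟩ := 𝒯.reaches_root t
  have hroot : Function.IsFixedPt 𝒯.parent 𝒯.root := 𝒯.parent_root
  have hbij := Function.bijOn_ptsOfPeriod 𝒯.parent hn
  exact hbij.injOn.iterate hbij.mapsTo k ht (hroot.isPeriodicPt n)
    (hk.trans (hroot.iterate k).symm)

theorem InSubtree.refl (𝒯 : RootedTreeDecomp V ι G) (t : ι) : 𝒯.InSubtree t t := ⟨0, rfl⟩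

theorem inSubtree_parent (𝒯 : RootedTreeDecomp V ι G) (t : ι) : 𝒯.InSubtree (𝒯.parent t) t :=
  ⟨1, rfl⟩

theorem InSubtree.trans (hab : 𝒯.InSubtree a b) (hbc : 𝒯.InSubtree b c) : 𝒯.InSubtree a c := by
  obtain ⟨n, rfl⟩ := hab
  obtain ⟨k, rfl⟩ := hbc
  exact ⟨n + k, Function.iterate_add_apply ..⟩

theorem InSubtree.eq_or_inSubtree_parent (h : 𝒯.InSubtree a b) :
    a = b ∨ 𝒯.InSubtree a (𝒯.parent b) := by
  obtain ⟨_ | n, rfl⟩ := h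
  · exact .inl rfl
  · exact .inr ⟨n, rfl⟩

theorem not_inSubtree_parent (ht : t ≠ 𝒯.root) : ¬𝒯.InSubtree t (𝒯.parent t) :=
  fun ⟨n, hn⟩ => ht (eq_root_of_isPeriodicPt n.succ_pos hn)

theorem InSubtree.antisymm (hab : 𝒯.InSubtree a b) (hba : 𝒯.InSubtree b a) : a = b := by
  rcases hab.eq_or_inSubtree_parent with rfl | hab'
  · rfl
  have hb : b = 𝒯.root := by
    by_contra hb
    exact not_inSubtree_parent hb (hba.trans hab')
  obtain ⟨n, rfl⟩ := hab
  rw [hb, Function.iterate_fixed 𝒯.parent_root]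

theorem InSubtree.total (ha : 𝒯.InSubtree a t) (hb : 𝒯.InSubtree b t) :
    𝒯.InSubtree a b ∨ 𝒯.InSubtree b a := by
  obtain ⟨n, rfl⟩ := ha
  obtain ⟨k, rfl⟩ := hb
  rcases le_total n k with h | h
  · exact .inr ⟨k - n, by rw [← Function.iterate_add_apply, Nat.sub_add_cancel h]⟩
  · exact .inl ⟨n - k, by rw [← Function.iterate_add_apply, Nat.sub_add_cancel h]⟩

theorem exists_isTopOf_setOf_mem_bag (𝒯 : RootedTreeDecomp V ι G) (v : V) :
    ∃ m, 𝒯.IsTopOf {t | v ∈ 𝒯.bag t} m := by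
  obtain ⟨m, hm, hchain⟩ := 𝒯.bags_connected v
  exact ⟨m, hm, fun t ht => (hchain t ht).imp fun _ => And.left⟩

theorem mem_bag_of_inSubtree_of_inSubtree (hab : 𝒯.InSubtree a b) (hbc : 𝒯.InSubtree b c)
    (ha : v ∈ 𝒯.bag a) (hc : v ∈ 𝒯.bag c) : v ∈ 𝒯.bag b := by
  obtain ⟨m, hm, hchain⟩ := 𝒯.bags_connected v
  obtain ⟨n, hn, hn'⟩ := hchain c hc
  obtain ⟨k, rfl⟩ := hbc
  rcases le_total k n with hkn | hnk
  · exact hn' k hkn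
  · -- No chain condition holds above `m`, but there `b` is squeezed between `a` and `m`.
    have hbm : 𝒯.InSubtree (𝒯.parent^[k] c) m :=
      ⟨k - n, by rw [← hn, ← Function.iterate_add_apply, Nat.sub_add_cancel hnk]⟩
    have hma : 𝒯.InSubtree m a := (hchain a ha).imp fun _ => And.left
    rwa [hbm.antisymm (hma.trans hab)]

theorem bag_subset_Vt (𝒯 : RootedTreeDecomp V ι G) (t : ι) : 𝒯.bag t ⊆ 𝒯.Vt t :=
  fun _ hv => ⟨t, .refl 𝒯 t, hv⟩

theorem InSubtree.Vt_subset (h : 𝒯.InSubtree a b) : 𝒯.Vt b ⊆ 𝒯.Vt a :=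
  fun _ ⟨s, hs, hv⟩ => ⟨s, h.trans hs, hv⟩

theorem InSubtree.Lt_subset (h : 𝒯.InSubtree a b) : 𝒯.Lt b ⊆ 𝒯.Lt a := by
  rintro v ⟨⟨s, hs, hvs⟩, hvb⟩
  exact ⟨⟨s, h.trans hs, hvs⟩, fun hva => hvb (mem_bag_of_inSubtree_of_inSubtree h hs hva hvs)⟩

theorem IsTopOf.inSubtree_of_mem_Lt (hm : 𝒯.IsTopOf {t | v ∈ 𝒯.bag t} m) (hv : v ∈ 𝒯.Lt t) :
    𝒯.InSubtree t m := by
  obtain ⟨⟨s, hts, hvs⟩, hvt⟩ := hv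
  rcases hts.total (hm.2 s hvs) with htm | hmt
  · exact htm
  · exact absurd (mem_bag_of_inSubtree_of_inSubtree hmt hts hm.1 hvs) hvt

theorem inSubtree_total_of_mem_Lt (ha : v ∈ 𝒯.Lt a) (hb : v ∈ 𝒯.Lt b) :
    𝒯.InSubtree a b ∨ 𝒯.InSubtree b a := by
  obtain ⟨m, hm⟩ := 𝒯.exists_isTopOf_setOf_mem_bag v
  exact (hm.inSubtree_of_mem_Lt ha).total (hm.inSubtree_of_mem_Lt hb)

theorem InSubtree.LS_subset (h : 𝒯.InSubtree a b) : 𝒯.LS S b ⊆ 𝒯.LS S a :=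
  Set.inter_subset_inter_left S h.Lt_subset

theorem InSubtree.RS_subset (h : 𝒯.InSubtree a b) : 𝒯.RS S a ⊆ 𝒯.RS S b :=
  Set.inter_subset_inter_left S (Set.compl_subset_compl.2 h.Vt_subset)

theorem XS_eq_sdiff (𝒯 : RootedTreeDecomp V ι G) (S : Set V) (t : ι) :
    𝒯.XS S t = S \ (𝒯.LS S t ∪ 𝒯.RS S t) := by
  ext v
  have hbag : v ∈ 𝒯.bag t → v ∈ 𝒯.Vt t := fun hv => 𝒯.bag_subset_Vt t hv
  simp only [XS, LS, RS, Lt, Rt, Set.mem_inter_iff, Set.mem_sdiff, Set.mem_union,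
    Set.mem_compl_iff]
  tauto

theorem STrace_eq_iff :
    𝒯.STrace S a = 𝒯.STrace S b ↔ 𝒯.LS S a = 𝒯.LS S b ∧ 𝒯.RS S a = 𝒯.RS S b := by
  simp only [STrace, Prod.mk.injEq, XS_eq_sdiff]
  grind

theorem STrace_eq_of_inSubtree_of_inSubtree (hab : 𝒯.InSubtree a b) (hbc : 𝒯.InSubtree b c)
    (h : 𝒯.STrace S a = 𝒯.STrace S c) : 𝒯.STrace S a = 𝒯.STrace S b := by
  obtain ⟨hL, hR⟩ := STrace_eq_iff.1 h
  exact STrace_eq_iff.2 ⟨(hL.le.trans hbc.LS_subset).antisymm hab.LS_subset,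
    hab.RS_subset.antisymm (hbc.RS_subset.trans hR.ge)⟩

end RootedTreeDecomp

open RootedTreeDecomp in
theorem statement3_general {V ι : Type} {G : SimpleGraph V}
    (𝒯 : RootedTreeDecomp V ι G) (S : Set V) (tmax : ι)
    (hL : (𝒯.LS S tmax).Nonempty)
    (htop : ∀ t', 𝒯.STrace S t' = 𝒯.STrace S tmax → 𝒯.InSubtree tmax t')
    (hroot : tmax ≠ 𝒯.root) :
    𝒯.IsSBottom S (𝒯.parent tmax) := by
  have htrace : 𝒯.STrace S (𝒯.parent tmax) ≠ 𝒯.STrace S tmax :=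
    fun h => not_inSubtree_parent hroot (htop _ h)
  have hparent : 𝒯.InSubtree (𝒯.parent tmax) tmax := 𝒯.inSubtree_parent tmax
  obtain ⟨v, hv⟩ := hL
  have hvp : v ∈ 𝒯.LS S (𝒯.parent tmax) := hparent.LS_subset hv
  refine ⟨⟨v, hvp⟩, fun t ht => ?_⟩
  have hvt : v ∈ 𝒯.LS S t := (STrace_eq_iff.1 ht).1 ▸ hvp
  have not_below : ¬𝒯.InSubtree tmax t :=
    fun h => htrace (STrace_eq_of_inSubtree_of_inSubtree hparent h ht.symm)
  have above : 𝒯.InSubtree t tmax :=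
    (inSubtree_total_of_mem_Lt hvt.1 hv.1).resolve_right not_below
  exact above.eq_or_inSubtree_parent.resolve_left
    fun h => not_below (h ▸ .refl 𝒯 t)

/-- If `tmax` is the top node of the directed path of an `S`-trace
with nonempty `L`-part and `tmax` has a parent, then this parent is an `S`-bottom
node. -/
theorem statement3 {V ι : Type} [Fintype V] [DecidableEq V] {G : SimpleGraph V}
    (𝒯 : RootedTreeDecomp V ι G) (S : Set V) (tmax : ι)
    (hL : (𝒯.LS S tmax).Nonempty)
    (htop : ∀ t', 𝒯.STrace S t' = 𝒯.STrace S tmax → 𝒯.InSubtree tmax t')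
    (hroot : tmax ≠ 𝒯.root) :
    𝒯.IsSBottom S (𝒯.parent tmax) :=
  statement3_general 𝒯 S tmax hL htop hroot
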